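/- Let (X,d) be a σ-compact metric space, α > 0, Φ = {φ_t}_{t∈ℝ} a Borel measurable, (d,α)-polynomially-sub-divergent flow on X, β > 0, μ a Φ-invariant, (d,β)-sub-uniform Borel probability measure on X, γ > 0, and f : X → ℝ a Lipschitz function that is constant outside of a compact set, such that Φ is (f,μ,γ)-polynomially-mixing. Then the Hausdorff dimension of E(Φ,μ,f) is at most β − α⁻¹·min{1,γ}. -/

import Mathlib

/-!
Put `m = ∫ f dμ` and `g = f - m`. Polynomial mixing and invariance bound the second moment of the
orbit averages, `‖A_T g‖₂² ≲ T ^ (-κ)` for every `κ < min 1 γ` (`integral_sq_orbit_integral_le`), so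
by Chebyshev's inequality `{|A_T g| ≥ ε / 2}` has measure `≲ T ^ (-κ)` (`measure_deviation_le`).

On the other hand sub-divergence, together with `f` being Lipschitz and constant off a compact set,
makes `A_T g` vary by at most `ε / 2` on balls of radius `≍ T ^ (-α)` centred in a compact set `K`,
for `T` large. Hence such a ball around a point of `K` with `|A_T g| > ε` lies in
`{|A_T g| ≥ ε / 2}`, and it has measure `≳ T ^ (-αβ)` by sub-uniformity. A maximal separated set
(`exists_cover_card_mul_le`) shows that `{x ∈ K : |A_T g x| > ε}` is covered by
`≲ T ^ (αβ - κ)` balls of radius `≍ T ^ (-α)`.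

It suffices to use times `T = q ^ n` with `q > 1` close to `1`. The points of `K` for which
`|A_T g| > 2ε` for arbitrarily large `T` then lie in a limsup set whose covers have summable
`s`-dimensional cost as soon as `αβ - κ - αs < 0` (`dimH_le_of_covers`, `dimH_large_deviation_le`).
Countably many `K` and `ε` exhaust the exceptional set; finally `κ → min 1 γ`.

The space need not be locally compact, so a ball centred in `K` need not lie in any compact set,
whereas sub-divergence compares points of one compact set only. The estimate nevertheless extends
to pairs with one point in `K` and the other one near it (`subdivergence_near_compact`).
-/


open MeasureTheory Filter Metric Set

/-- Orbit average `(A_T f)(x) = (1/T) ∫₀^T f(φ_t x) dt`. -/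
noncomputable def flowAvg {X : Type*} (φ : ℝ → X → X) (f : X → ℝ) (T : ℝ) (x : X) : ℝ :=
  (1 / T) * ∫ t in (0:ℝ)..T, f (φ t x)

open scoped Topology ENNReal NNReal

/-! ### Sub-divergence near a compact set -/

/-- Sub-divergence holds uniformly for pairs with one point in `K` and the other one at distance
less than `δ` from it, whichever of the two orbits returns to `K` at time `t`. A sequence of
counterexamples would have a subsequence whose second points converge to a point of `K`; adding
them to `K` keeps it compact, contradicting `hdiv` for the enlarged set. -/
theorem subdivergence_near_compact {X : Type*} [MetricSpace X] {α : ℝ} {φ : ℝ → X → X}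
    (hdiv : ∀ K : Set X, IsCompact K → ∃ C > 0, ∀ x ∈ K, ∀ y ∈ K, ∀ t : ℝ, 1 < t →
      φ t x ∈ K → dist (φ t x) (φ t y) ≤ C * t ^ α * dist x y)
    {K : Set X} (hK : IsCompact K) :
    ∃ C > 0, ∃ δ > 0, ∀ x ∈ K, ∀ y, dist x y < δ → ∀ t : ℝ, 1 < t →
      (φ t x ∈ K ∨ φ t y ∈ K) → dist (φ t x) (φ t y) ≤ C * t ^ α * dist x y := by
  by_contra! H
  have H' : ∀ n : ℕ, ∃ x ∈ K, ∃ y, dist x y < 1 / ((n : ℝ) + 1) ∧ ∃ t : ℝ, 1 < t ∧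
      (φ t x ∈ K ∨ φ t y ∈ K) ∧ ((n : ℝ) + 1) * t ^ α * dist x y < dist (φ t x) (φ t y) := by
    intro n
    obtain ⟨x, hx, y, hxy, t, ht, h1, h2⟩ := H ((n : ℝ) + 1) (by positivity) (1 / ((n : ℝ) + 1))
      (by positivity)
    exact ⟨x, hx, y, hxy, t, ht, h1, h2⟩
  choose x hx y hxy t ht hor hlt using H'
  obtain ⟨a, haK, ψ, hψ, hlim⟩ := hK.tendsto_subseq hx
  have hdist : Tendsto (fun n => dist ((x ∘ ψ) n) ((y ∘ ψ) n)) atTop (𝓝 0) := by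
    refine squeeze_zero (fun _ => dist_nonneg) (fun n => (hxy (ψ n)).le) ?_
    exact tendsto_one_div_add_atTop_nhds_zero_nat.comp hψ.tendsto_atTop
  have hlimy : Tendsto (y ∘ ψ) atTop (𝓝 a) := (tendsto_iff_of_dist hdist).1 hlim
  have hK' : IsCompact (K ∪ insert a (range (y ∘ ψ))) := hK.union hlimy.isCompact_insert_range
  obtain ⟨C, hC, hCK⟩ := hdiv _ hK'
  obtain ⟨n, hn⟩ := exists_nat_ge C
  have hnψ : (n : ℝ) ≤ ψ n := by exact_mod_cast hψ.id_le n
  have hxm : x (ψ n) ∈ K ∪ insert a (range (y ∘ ψ)) := Or.inl (hx _)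
  have hym : y (ψ n) ∈ K ∪ insert a (range (y ∘ ψ)) := Or.inr (Or.inr ⟨n, rfl⟩)
  have hle : dist (φ (t (ψ n)) (x (ψ n))) (φ (t (ψ n)) (y (ψ n)))
      ≤ C * t (ψ n) ^ α * dist (x (ψ n)) (y (ψ n)) := by
    rcases hor (ψ n) with h | h
    · exact hCK _ hxm _ hym _ (ht _) (Or.inl h)
    · have := hCK _ hym _ hxm _ (ht _) (Or.inl h)
      rwa [dist_comm, dist_comm (y (ψ n))] at this
  have h0 : 0 ≤ t (ψ n) ^ α * dist (x (ψ n)) (y (ψ n)) :=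
    mul_nonneg (Real.rpow_nonneg (by linarith [ht (ψ n)]) _) dist_nonneg
  have := hlt (ψ n)
  nlinarith

/-! ### Covers and Hausdorff dimension -/

/-- Packing bound: the centres form a maximal subset of `A` with distances greater than `r`, so that
the balls of radius `r / 2` are disjoint and contained in `B`. -/
theorem exists_cover_card_mul_le {X : Type*} [MetricSpace X] [MeasurableSpace X] [BorelSpace X]
    (μ : Measure X) [IsFiniteMeasure μ] {A B : Set X} {r v : ℝ} (hv : 0 < v)
    (hA : ∀ x ∈ A, ENNReal.ofReal v ≤ μ (ball x (r / 2))) (hAB : ∀ x ∈ A, ball x (r / 2) ⊆ B) :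
    ∃ F : Finset X, A ⊆ (⋃ x ∈ F, closedBall x r) ∧ (F.card : ℝ) * v ≤ μ.real B := by
  classical
  let P : Finset X → Prop := fun F => (F : Set X) ⊆ A ∧ ∀ x ∈ F, ∀ y ∈ F, x ≠ y → r < dist x y
  have hP : ∀ F, P F → (F.card : ℝ) * v ≤ μ.real B := by
    intro F hF
    have hdisj : (F : Set X).PairwiseDisjoint fun x => ball x (r / 2) := by
      intro x hx y hy hxy
      exact ball_disjoint_ball (by linarith [hF.2 x hx y hy hxy])
    have h1 : μ.real (⋃ x ∈ F, ball x (r / 2)) = ∑ x ∈ F, μ.real (ball x (r / 2)) :=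
      measureReal_biUnion_finset hdisj fun _ _ => measurableSet_ball
    have h2 : μ.real (⋃ x ∈ F, ball x (r / 2)) ≤ μ.real B :=
      measureReal_mono (iUnion₂_subset fun x hx => hAB x (hF.1 hx))
    have h3 : ∀ x ∈ F, v ≤ μ.real (ball x (r / 2)) := fun x hx =>
      (ENNReal.ofReal_le_iff_le_toReal (measure_ne_top _ _)).1 (hA x (hF.1 hx))
    have h4 := Finset.card_nsmul_le_sum F _ v h3
    rw [nsmul_eq_mul] at h4
    linarith
  let S : Set ℕ := {n | ∃ F, P F ∧ F.card = n}
  have hSne : S.Nonempty := ⟨0, ∅, ⟨by simp, by simp⟩, rfl⟩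
  have hSb : BddAbove S := by
    refine ⟨⌈μ.real B / v⌉₊, ?_⟩
    rintro _ ⟨F, hF, rfl⟩
    have := (le_div_iff₀ hv).2 (hP F hF)
    exact_mod_cast this.trans (Nat.le_ceil _)
  obtain ⟨F, hF, hcard⟩ := Nat.sSup_mem hSne hSb
  refine ⟨F, fun x hx => ?_, hP F hF⟩
  -- a point far from `F` could be added to the maximal separated set
  by_contra hcon
  simp only [mem_iUnion, mem_closedBall, not_exists, not_le] at hcon
  by_cases hxF : x ∈ F
  · have := hcon x hxF
    have hv' := (ENNReal.ofReal_pos.2 hv).trans_le (hA x hx)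
    rw [dist_self] at this
    rw [ball_eq_empty.2 (by linarith)] at hv'
    simp at hv'
  have hPF : P (insert x F) := by
    refine ⟨?_, ?_⟩
    · rw [Finset.coe_insert]
      exact insert_subset hx hF.1
    · intro a ha b hb hab
      rcases Finset.mem_insert.1 ha with rfl | ha' <;> rcases Finset.mem_insert.1 hb with rfl | hb'
      · exact absurd rfl hab
      · exact hcon b hb'
      · rw [dist_comm]; exact hcon a ha'
      · exact hF.2 a ha' b hb' hab
  have := le_csSup hSb (show (insert x F).card ∈ S from ⟨_, hPF, rfl⟩)
  rw [Finset.card_insert_of_notMem hxF] at this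
  omega

/-- Hausdorff dimension of a limsup set: each point of `S` lies in infinitely many of the `A n`, and
the covers of the `A n` by balls of radius `r n` have summable `s`-dimensional cost. -/
theorem dimH_le_of_covers {X : Type*} [MetricSpace X] {S : Set X} {A : ℕ → Set X} {r b : ℕ → ℝ}
    {s : ℝ} (hs : 0 ≤ s) {N₀ : ℕ} (hr0 : ∀ n, 0 ≤ r n) (hra : Antitone r)
    (hr : Tendsto r atTop (𝓝 0)) (hb : Summable b)
    (hS : ∀ x ∈ S, ∀ N, ∃ n ≥ N, x ∈ A n)
    (hA : ∀ n ≥ N₀, ∃ F : Finset X, A n ⊆ (⋃ x ∈ F, closedBall x (r n)) ∧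
      (F.card : ℝ) * r n ^ s ≤ b n) :
    dimH S ≤ ENNReal.ofReal s := by
  borelize X
  choose! F hcov hcard using hA
  have hdiam : ∀ (x : X) (n : ℕ), ediam (closedBall x (r n)) ≤ ENNReal.ofReal (2 * r n) := by
    intro x n
    rw [← closedEBall_ofReal (hr0 n)]
    refine ediam_closedEBall_le.trans ?_
    rw [ENNReal.ofReal_mul (by norm_num)]
    simp
  have key : Measure.hausdorffMeasure s S ≤ liminf (fun m : ℕ =>
      ∑' i : (Σ k : ℕ, {x // x ∈ F (N₀ + m + k)}), ediam (closedBall i.2.1 (r (N₀ + m + i.1))) ^ s)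
        atTop := by
    refine Measure.hausdorffMeasure_le_liminf_tsum
      (ι := fun m : ℕ => (Σ k : ℕ, {x // x ∈ F (N₀ + m + k)})) s S
      (fun m => ENNReal.ofReal (2 * r m)) ?_
      (fun m i => closedBall i.2.1 (r (N₀ + m + i.1))) ?_ ?_
    · have := (ENNReal.continuous_ofReal.tendsto _).comp (hr.const_mul 2)
      rw [mul_zero, ENNReal.ofReal_zero] at this
      exact this
    · refine Eventually.of_forall fun m i => (hdiam _ _).trans ?_
      refine ENNReal.ofReal_le_ofReal ?_
      have := hra (show m ≤ N₀ + m + i.1 by omega)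
      linarith
    · refine Eventually.of_forall fun m x hx => ?_
      obtain ⟨n, hn, hxn⟩ := hS x hx (N₀ + m)
      obtain ⟨k, rfl⟩ := Nat.exists_eq_add_of_le hn
      obtain ⟨y, hy, hxy⟩ := mem_iUnion₂.1 (hcov (N₀ + m + k) (by omega) hxn)
      exact mem_iUnion.2 ⟨⟨k, ⟨y, hy⟩⟩, hxy⟩
  have hbound : ∀ m : ℕ,
      ∑' i : (Σ k : ℕ, {x // x ∈ F (N₀ + m + k)}), ediam (closedBall i.2.1 (r (N₀ + m + i.1))) ^ s
        ≤ ENNReal.ofReal (2 ^ s) * ∑' n, ENNReal.ofReal (b n) := by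
    intro m
    rw [ENNReal.tsum_sigma']
    calc ∑' k : ℕ, ∑' x : {x // x ∈ F (N₀ + m + k)},
            ediam (closedBall x.1 (r (N₀ + m + k))) ^ s
        ≤ ∑' k : ℕ, ENNReal.ofReal (2 ^ s) * ENNReal.ofReal (b (N₀ + m + k)) := by
          refine ENNReal.tsum_le_tsum fun k => ?_
          rw [tsum_fintype]
          calc ∑ x : {x // x ∈ F (N₀ + m + k)}, ediam (closedBall x.1 (r (N₀ + m + k))) ^ s
              ≤ ∑ x : {x // x ∈ F (N₀ + m + k)},
                  ENNReal.ofReal (2 ^ s * r (N₀ + m + k) ^ s) := by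
                refine Finset.sum_le_sum fun x _ => ?_
                refine (ENNReal.rpow_le_rpow (hdiam _ _) hs).trans ?_
                rw [ENNReal.ofReal_rpow_of_nonneg (by have := hr0 (N₀ + m + k); positivity) hs,
                  Real.mul_rpow (by norm_num) (hr0 _)]
            _ = ENNReal.ofReal (2 ^ s * ((F (N₀ + m + k)).card * r (N₀ + m + k) ^ s)) := by
                rw [Finset.sum_const, Finset.card_univ, Fintype.card_coe,
                  ← ENNReal.ofReal_nsmul, nsmul_eq_mul]
                congr 1; ring
            _ ≤ ENNReal.ofReal (2 ^ s * b (N₀ + m + k)) := by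
                refine ENNReal.ofReal_le_ofReal ?_
                exact mul_le_mul_of_nonneg_left (hcard _ (by omega)) (by positivity)
            _ = _ := ENNReal.ofReal_mul (by positivity)
      _ = ENNReal.ofReal (2 ^ s) * ∑' k : ℕ, ENNReal.ofReal (b (N₀ + m + k)) :=
          ENNReal.tsum_mul_left
      _ ≤ _ := by
          refine mul_le_mul' le_rfl ?_
          exact ENNReal.tsum_comp_le_tsum_of_injective (add_right_injective (N₀ + m))
            (fun n => ENNReal.ofReal (b n))
  have hfin : Measure.hausdorffMeasure s S ≠ ∞ := by
    refine ne_top_of_le_ne_top ?_ (key.trans (liminf_le_of_frequently_le'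
      (Frequently.of_forall hbound)))
    exact ENNReal.mul_ne_top ENNReal.ofReal_ne_top hb.tsum_ofReal_ne_top
  have := dimH_le_of_hausdorffMeasure_ne_top (s := S) (d := s.toNNReal)
    (by rwa [Real.coe_toNNReal s hs])
  exact this

/-! ### The second moment of orbit averages -/

theorem integral_le_of_singular_kernel {c : ℝ → ℝ} {D κ T s : ℝ} (hκ : κ < 1) (hD : 0 ≤ D)
    (hs : s ∈ Ioc 0 T) (hc : ∀ t, t ≠ s → c t ≤ D * |t - s| ^ (-κ))
    (hci : ∀ a b, IntervalIntegrable c volume a b) :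
    ∫ t in (0:ℝ)..T, c t ≤ 2 * D / (1 - κ) * T ^ (1 - κ) := by
  have hκ' : 0 < 1 - κ := by linarith
  have hInt : ∀ a b : ℝ, IntervalIntegrable (fun x : ℝ => x ^ (-κ)) volume a b := fun a b =>
    intervalIntegral.intervalIntegrable_rpow' (by linarith)
  have hval : ∀ a : ℝ, 0 ≤ a → a ≤ T →
      ∫ x in (0:ℝ)..a, D * x ^ (-κ) ≤ D / (1 - κ) * T ^ (1 - κ) := by
    intro a ha haT
    rw [intervalIntegral.integral_const_mul, integral_rpow (Or.inl (by linarith)),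
      Real.zero_rpow (by linarith), sub_zero, show -κ + 1 = 1 - κ by ring,
      mul_div_assoc', div_mul_eq_mul_div]
    gcongr
  rw [← intervalIntegral.integral_add_adjacent_intervals (hci 0 s) (hci s T)]
  have h1 : ∫ t in (0:ℝ)..s, c t ≤ D / (1 - κ) * T ^ (1 - κ) := by
    have e : ∫ t in (0:ℝ)..s, D * (s - t) ^ (-κ) = ∫ x in (0:ℝ)..s, D * x ^ (-κ) := by
      rw [intervalIntegral.integral_comp_sub_left (fun x => D * x ^ (-κ)) s]
      simp
    refine le_trans ?_ (e.le.trans (hval s hs.1.le hs.2))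
    refine intervalIntegral.integral_mono_on_of_le_Ioo hs.1.le (hci _ _) ?_ ?_
    · have := ((hInt s 0).comp_sub_left s).const_mul D
      simpa using this
    · intro t ht
      have := hc t ht.2.ne
      rwa [abs_sub_comm, abs_of_pos (by linarith [ht.2])] at this
  have h2 : ∫ t in s..T, c t ≤ D / (1 - κ) * T ^ (1 - κ) := by
    have e : ∫ t in s..T, D * (t - s) ^ (-κ) = ∫ x in (0:ℝ)..(T - s), D * x ^ (-κ) := by
      rw [intervalIntegral.integral_comp_sub_right (fun x => D * x ^ (-κ)) s]
      simp
    refine le_trans ?_ (e.le.trans (hval (T - s) (by linarith [hs.2]) (by linarith [hs.1])))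
    refine intervalIntegral.integral_mono_on_of_le_Ioo hs.2 (hci _ _) ?_ ?_
    · have := ((hInt 0 (T - s)).comp_sub_right s).const_mul D
      simpa using this
    · intro t ht
      have := hc t ht.1.ne'
      rwa [abs_of_pos (by linarith [ht.1])] at this
  calc _ ≤ _ := add_le_add h1 h2
    _ = _ := by ring

/-- Decay of correlations at rate `κ < 1` bounds the second moment of the orbit integral: by Fubini
it is the integral over `[0, T]²` of the correlation of times `s` and `t`, which is at most
`D * |t - s| ^ (-κ)`. -/
theorem integral_sq_orbit_integral_le {X : Type*} [MeasurableSpace X] (μ : Measure X)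
    [IsProbabilityMeasure μ] {φ : ℝ → X → X}
    (hφadd : ∀ s t : ℝ, ∀ x, φ (s + t) x = φ s (φ t x))
    (hφmeas : Measurable fun p : ℝ × X => φ p.1 p.2)
    (hinv : ∀ t : ℝ, MeasurePreserving (φ t) μ μ)
    {g : X → ℝ} (hg : Measurable g) {M : ℝ} (hM : ∀ x, |g x| ≤ M)
    {D κ : ℝ} (hκ : κ < 1) (hD : 0 ≤ D)
    (hc : ∀ t : ℝ, 0 < t → |∫ x, g x * g (φ t x) ∂μ| ≤ D * t ^ (-κ)) {T : ℝ} (hT : 0 < T) :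
    ∫ x, (∫ t in (0:ℝ)..T, g (φ t x)) ^ 2 ∂μ ≤ 2 * D / (1 - κ) * T ^ (2 - κ) := by
  have hM0 : 0 ≤ M := by
    have : Nonempty X := nonempty_of_isProbabilityMeasure μ
    exact (abs_nonneg _).trans (hM (Classical.arbitrary X))
  have hh : Measurable fun p : ℝ × X => g (φ p.1 p.2) := hg.comp hφmeas
  have hMM : ∀ x y, ‖g x * g y‖ ≤ M * M := fun x y => by
    rw [norm_mul]
    exact mul_le_mul (hM x) (hM y) (norm_nonneg _) hM0
  let c : ℝ → ℝ → ℝ := fun s t => ∫ x, g (φ s x) * g (φ t x) ∂μ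
  -- by invariance the correlation of times `s ≤ t` depends on `t - s` only
  have hcorr : ∀ s t, s ≤ t → c s t = ∫ x, g x * g (φ (t - s) x) ∂μ := by
    intro s t _
    have hm : Measurable fun x => g x * g (φ (t - s) x) :=
      hg.mul (hg.comp (hinv (t - s)).measurable)
    conv_rhs => rw [← (hinv s).map_eq]
    rw [integral_map (hinv s).measurable.aemeasurable hm.aestronglyMeasurable]
    refine integral_congr_ae (Eventually.of_forall fun x => ?_)
    simp only
    rw [← hφadd, sub_add_cancel]
  have hcb : ∀ s t, t ≠ s → |c s t| ≤ D * |t - s| ^ (-κ) := by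
    intro s t hts
    rcases lt_or_gt_of_ne hts with h | h
    · have e : c s t = c t s := by
        simp only [c]
        congr 1; ext x; ring
      rw [e, hcorr t s h.le, abs_sub_comm, abs_of_pos (sub_pos.2 h)]
      exact hc _ (sub_pos.2 h)
    · rw [hcorr s t h.le, abs_of_pos (sub_pos.2 h)]
      exact hc _ (sub_pos.2 h)
  have hcm : Measurable fun p : ℝ × ℝ => c p.1 p.2 := by
    have : Measurable fun q : (ℝ × ℝ) × X => g (φ q.1.1 q.2) * g (φ q.1.2 q.2) :=
      (hh.comp ((measurable_fst.comp measurable_fst).prodMk measurable_snd)).mul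
        (hh.comp ((measurable_snd.comp measurable_fst).prodMk measurable_snd))
    exact (this.stronglyMeasurable.integral_prod_right').measurable
  have hcM : ∀ s t, ‖c s t‖ ≤ M * M := fun s t => by
    have := norm_integral_le_of_norm_le_const (μ := μ)
      (Eventually.of_forall fun x => hMM (φ s x) (φ t x))
    simpa using this
  have hci : ∀ s a b, IntervalIntegrable (fun t => |c s t|) volume a b := by
    intro s a b
    have hm : Measurable fun t => |c s t| :=
      measurable_abs.comp (hcm.comp (measurable_const.prodMk measurable_id))
    refine (intervalIntegrable_const (c := M * M)).mono_fun hm.aestronglyMeasurable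
      (Eventually.of_forall fun t => ?_)
    simp only [norm_abs_eq_norm]
    exact (hcM s t).trans (le_abs_self _)
  let ν : Measure ℝ := volume.restrict (Ioc 0 T)
  have hsq : ∀ x, (∫ t in (0:ℝ)..T, g (φ t x)) ^ 2
      = ∫ p, g (φ p.1 x) * g (φ p.2 x) ∂(ν.prod ν) := by
    intro x
    rw [integral_prod_mul (fun s => g (φ s x)) (fun s => g (φ s x)),
      intervalIntegral.integral_of_le hT.le, sq]
  have hswap : ∫ x, (∫ t in (0:ℝ)..T, g (φ t x)) ^ 2 ∂μ = ∫ p, c p.1 p.2 ∂(ν.prod ν) := by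
    simp_rw [hsq]
    refine integral_integral_swap ?_
    have hm : Measurable fun q : X × (ℝ × ℝ) => g (φ q.2.1 q.1) * g (φ q.2.2 q.1) :=
      (hh.comp ((measurable_fst.comp measurable_snd).prodMk measurable_fst)).mul
        (hh.comp ((measurable_snd.comp measurable_snd).prodMk measurable_fst))
    exact Integrable.of_bound hm.aestronglyMeasurable (M * M)
      (Eventually.of_forall fun q => hMM _ _)
  have hcint : Integrable (fun p : ℝ × ℝ => c p.1 p.2) (ν.prod ν) :=
    Integrable.of_bound hcm.aestronglyMeasurable (M * M) (Eventually.of_forall fun q => hcM _ _)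
  rw [hswap]
  calc ∫ p, c p.1 p.2 ∂(ν.prod ν) ≤ ∫ p, |c p.1 p.2| ∂(ν.prod ν) :=
        integral_mono hcint hcint.abs fun p => le_abs_self _
    _ = ∫ s, ∫ t, |c s t| ∂ν ∂ν := integral_prod _ hcint.abs
    _ = ∫ s in Ioc 0 T, ∫ t in (0:ℝ)..T, |c s t| := by
        simp only [intervalIntegral.integral_of_le hT.le, ν]
    _ ≤ ∫ s in Ioc 0 T, 2 * D / (1 - κ) * T ^ (1 - κ) := by
        refine setIntegral_mono_on ?_ (integrable_const _) measurableSet_Ioc fun s hs =>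
          integral_le_of_singular_kernel hκ hD hs (hcb s) (hci s)
        have := hcint.abs.integral_prod_left
        simp only [intervalIntegral.integral_of_le hT.le]
        exact this
    _ = 2 * D / (1 - κ) * T ^ (2 - κ) := by
        rw [setIntegral_const, smul_eq_mul, show (2 : ℝ) - κ = 1 + (1 - κ) by ring,
          Real.rpow_add hT, Real.rpow_one]
        simp [hT.le]
        ring

/-- Chebyshev's inequality for the second moment of the orbit averages. -/
theorem measure_deviation_le {X : Type*} [MeasurableSpace X] (μ : Measure X)
    [IsProbabilityMeasure μ] {φ : ℝ → X → X}
    (hφadd : ∀ s t : ℝ, ∀ x, φ (s + t) x = φ s (φ t x))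
    (hφmeas : Measurable fun p : ℝ × X => φ p.1 p.2)
    (hinv : ∀ t : ℝ, MeasurePreserving (φ t) μ μ)
    {g : X → ℝ} (hg : Measurable g) {M : ℝ} (hM : ∀ x, |g x| ≤ M)
    {D κ : ℝ} (hκ : κ < 1) (hD : 0 ≤ D)
    (hc : ∀ t : ℝ, 0 < t → |∫ x, g x * g (φ t x) ∂μ| ≤ D * t ^ (-κ)) {ε : ℝ} (hε : 0 < ε)
    {T : ℝ} (hT : 0 < T) :
    μ.real {x | ε / 2 ≤ |flowAvg φ g T x|} ≤ 2 * D / (1 - κ) * (4 / ε ^ 2) * T ^ (-κ) := by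
  have hh : Measurable fun p : ℝ × X => g (φ p.1 p.2) := hg.comp hφmeas
  have hm : Measurable fun x => ∫ t in (0:ℝ)..T, g (φ t x) := by
    simp only [intervalIntegral.integral_of_le hT.le]
    exact (hh.comp measurable_swap).stronglyMeasurable.integral_prod_right'.measurable
  have hbd : ∀ x, ‖(∫ t in (0:ℝ)..T, g (φ t x)) ^ 2‖ ≤ (M * T) ^ 2 := by
    intro x
    have := intervalIntegral.norm_integral_le_of_norm_le_const (a := 0) (b := T) (C := M)
      (f := fun t => g (φ t x)) fun t _ => hM _
    rw [sub_zero, abs_of_pos hT] at this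
    rw [norm_pow]
    exact pow_le_pow_left₀ (norm_nonneg _) this 2
  have h1 := mul_meas_ge_le_integral_of_nonneg (μ := μ)
    (f := fun x => (∫ t in (0:ℝ)..T, g (φ t x)) ^ 2) (Eventually.of_forall fun x => sq_nonneg _)
    (Integrable.of_bound (hm.pow_const 2).aestronglyMeasurable _ (Eventually.of_forall hbd))
    ((ε / 2 * T) ^ 2)
  have h2 := integral_sq_orbit_integral_le μ hφadd hφmeas hinv hg hM hκ hD hc hT
  have hset : {x | ε / 2 ≤ |flowAvg φ g T x|}
      = {x | (ε / 2 * T) ^ 2 ≤ (∫ t in (0:ℝ)..T, g (φ t x)) ^ 2} := by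
    ext x
    change ε / 2 ≤ |flowAvg φ g T x| ↔ (ε / 2 * T) ^ 2 ≤ (∫ t in (0:ℝ)..T, g (φ t x)) ^ 2
    rw [sq_le_sq, flowAvg, abs_mul, abs_of_pos (by positivity : 0 < 1 / T),
      abs_of_pos (by positivity : 0 < ε / 2 * T), one_div_mul_eq_div, le_div_iff₀ hT]
  rw [hset]
  have h3 : T ^ (2 - κ) = T ^ 2 * T ^ (-κ) := by
    rw [← Real.rpow_natCast T 2, ← Real.rpow_add hT]
    norm_num [sub_eq_add_neg]
  have h4 := h1.trans h2
  rw [← le_div_iff₀' (by positivity), h3] at h4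
  refine h4.trans (le_of_eq ?_)
  have : 1 - κ ≠ 0 := by linarith
  field_simp
  ring

/-! ### Regularity of orbit averages -/

/-- The times in `[0, 1]`, where sub-divergence says nothing, contribute at most `2 * M / T`. -/
theorem abs_flowAvg_sub_le {X : Type*} {φ : ℝ → X → X} {g : X → ℝ} {M : ℝ}
    (hM : ∀ x, |g x| ≤ M) (hInt : ∀ x a b, IntervalIntegrable (fun t => g (φ t x)) volume a b)
    {x y : X} {T Q : ℝ} (hT : 1 ≤ T) (hQ0 : 0 ≤ Q)
    (hQ : ∀ t, 1 < t → t ≤ T → |g (φ t x) - g (φ t y)| ≤ Q) :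
    |flowAvg φ g T x - flowAvg φ g T y| ≤ 2 * M / T + Q := by
  have hT0 : 0 < T := by linarith
  have hd : ∀ a b, IntervalIntegrable (fun t => g (φ t x) - g (φ t y)) volume a b := fun a b =>
    (hInt x a b).sub (hInt y a b)
  have e : flowAvg φ g T x - flowAvg φ g T y
      = (1 / T) * ((∫ t in (0:ℝ)..1, (g (φ t x) - g (φ t y)))
        + ∫ t in (1:ℝ)..T, (g (φ t x) - g (φ t y))) := by
    rw [intervalIntegral.integral_add_adjacent_intervals (hd _ _) (hd _ _),
      intervalIntegral.integral_sub (hInt x _ _) (hInt y _ _), flowAvg, flowAvg, mul_sub]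
  have h1 : |∫ t in (0:ℝ)..1, (g (φ t x) - g (φ t y))| ≤ 2 * M := by
    have := intervalIntegral.norm_integral_le_of_norm_le_const (a := 0) (b := 1) (C := 2 * M)
      (f := fun t => g (φ t x) - g (φ t y)) fun t _ => by
        rw [Real.norm_eq_abs]
        calc _ ≤ |g (φ t x)| + |g (φ t y)| := abs_sub _ _
          _ ≤ 2 * M := by linarith [hM (φ t x), hM (φ t y)]
    simpa using this
  have h2 : |∫ t in (1:ℝ)..T, (g (φ t x) - g (φ t y))| ≤ Q * T := by
    have := intervalIntegral.norm_integral_le_of_norm_le_const (a := 1) (b := T) (C := Q)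
      (f := fun t => g (φ t x) - g (φ t y)) fun t ht => by
        rw [uIoc_of_le hT] at ht
        exact hQ t ht.1 ht.2
    rw [Real.norm_eq_abs, abs_of_nonneg (by linarith : (0:ℝ) ≤ T - 1)] at this
    nlinarith
  rw [e, abs_mul, abs_of_pos (by positivity : (0:ℝ) < 1 / T)]
  calc _ ≤ 1 / T * (2 * M + Q * T) := by
        gcongr
        exact (abs_add_le _ _).trans (add_le_add h1 h2)
    _ = 2 * M / T + Q := by field_simp

/-- Used to pass from arbitrary times to a geometric sequence of times. -/
theorem abs_flowAvg_le_of_le {X : Type*} {φ : ℝ → X → X} {g : X → ℝ} {M : ℝ}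
    (hM : ∀ x, |g x| ≤ M) (hInt : ∀ x a b, IntervalIntegrable (fun t => g (φ t x)) volume a b)
    (x : X) {S T : ℝ} (hS : 0 < S) (hST : S ≤ T) :
    |flowAvg φ g T x| ≤ |flowAvg φ g S x| + M * (T - S) / S := by
  have hT : 0 < T := hS.trans_le hST
  have hM0 : 0 ≤ M := (abs_nonneg _).trans (hM x)
  have h2 : |∫ t in S..T, g (φ t x)| ≤ M * (T - S) := by
    have := intervalIntegral.norm_integral_le_of_norm_le_const (a := S) (b := T) (C := M)
      (f := fun t => g (φ t x)) fun t _ => hM _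
    rwa [Real.norm_eq_abs, abs_of_nonneg (by linarith : (0:ℝ) ≤ T - S)] at this
  rw [flowAvg, flowAvg, ← intervalIntegral.integral_add_adjacent_intervals (hInt x 0 S)
    (hInt x S T), abs_mul, abs_mul, abs_of_pos (by positivity : (0:ℝ) < 1 / T),
    abs_of_pos (by positivity : (0:ℝ) < 1 / S)]
  calc _ ≤ 1 / T * (|∫ t in (0:ℝ)..S, g (φ t x)| + M * (T - S)) := by
        gcongr
        exact (abs_add_le _ _).trans (add_le_add le_rfl h2)
    _ ≤ 1 / S * (|∫ t in (0:ℝ)..S, g (φ t x)| + M * (T - S)) := by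
        have : 0 ≤ M * (T - S) := mul_nonneg hM0 (by linarith)
        gcongr
    _ = _ := by ring

/-! ### Dimension of the exceptional set -/

/-- For fixed `K` and `ε`, the points of `K` whose orbit average exceeds `2 * ε` in absolute value at
arbitrarily large times have dimension at most `s`, whenever `s` exceeds `β - κ / α`. -/
theorem dimH_large_deviation_le {X : Type*} [MetricSpace X] [MeasurableSpace X] [BorelSpace X]
    (μ : Measure X) [IsFiniteMeasure μ] {φ : ℝ → X → X} {g : X → ℝ} {M : ℝ} (hM0 : 0 < M)
    (hM : ∀ x, |g x| ≤ M) (hInt : ∀ x a b, IntervalIntegrable (fun t => g (φ t x)) volume a b)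
    {α β κ s c r₀ δ Λ V ε : ℝ} (hα : 0 < α) (hs : 0 ≤ s) (hκ : α * β - κ - α * s < 0)
    (hc : 0 < c) (hr₀ : 0 < r₀) (hδ : 0 < δ) (hΛ : 0 < Λ) (hε : 0 < ε) {K : Set X}
    (hunif : ∀ x ∈ K, ∀ r : ℝ, 0 < r → r < r₀ → ENNReal.ofReal (c * r ^ β) ≤ μ (ball x r))
    (hnear : ∀ x ∈ K, ∀ y, dist x y < δ → ∀ t : ℝ, 1 < t →
      |g (φ t x) - g (φ t y)| ≤ Λ * t ^ α * dist x y)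
    (hvar : ∀ T : ℝ, 0 < T → μ.real {x | ε / 2 ≤ |flowAvg φ g T x|} ≤ V * T ^ (-κ)) :
    dimH {x ∈ K | ∃ᶠ T in atTop, 2 * ε < |flowAvg φ g T x|} ≤ ENNReal.ofReal s := by
  set q : ℝ := 1 + ε / M with hq
  have hq1 : 1 < q := by have : 0 < ε / M := by positivity
                         linarith
  have hq0 : 0 < q := by linarith
  have hTpos : ∀ n : ℕ, 0 < q ^ n := fun n => by positivity
  have hT1 : ∀ n : ℕ, 1 ≤ q ^ n := fun n => one_le_pow₀ hq1.le
  have hTlim : Tendsto (fun n : ℕ => q ^ n) atTop atTop := tendsto_pow_atTop_atTop_of_one_lt hq1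
  -- the radius at time `T` for which the Lipschitz error `Λ T ^ α (r / 2)` equals `ε / 4`
  set ρ : ℝ := ε / (2 * Λ) with hρ
  have hρ0 : 0 < ρ := by positivity
  let r : ℕ → ℝ := fun n => ρ * (q ^ n) ^ (-α)
  have hr0 : ∀ n, 0 < r n := fun n => mul_pos hρ0 (Real.rpow_pos_of_pos (hTpos n) _)
  have hrlim : Tendsto r atTop (𝓝 0) := by
    have := ((tendsto_rpow_neg_atTop hα).comp hTlim).const_mul ρ
    rwa [mul_zero] at this
  have hra : Antitone r := by
    intro m n hmn
    refine mul_le_mul_of_nonneg_left ?_ hρ0.le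
    exact Real.rpow_le_rpow_of_nonpos (hTpos m) (pow_le_pow_right₀ hq1.le hmn) (by linarith)
  have hev : ∀ᶠ n in atTop, r n < δ ∧ r n < r₀ ∧ 8 * M / ε ≤ q ^ n :=
    (hrlim.eventually_lt_const hδ).and
      ((hrlim.eventually_lt_const hr₀).and (hTlim.eventually_ge_atTop _))
  obtain ⟨N₀, hN₀⟩ := eventually_atTop.1 hev
  let b : ℕ → ℝ := fun n => V / (c * (ρ / 2) ^ β) * ρ ^ s * (q ^ (α * β - κ - α * s)) ^ n
  have hb : Summable b := by
    refine (summable_geometric_of_lt_one (Real.rpow_nonneg hq0.le _) ?_).mul_left _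
    exact Real.rpow_lt_one_of_one_lt_of_neg hq1 hκ
  refine dimH_le_of_covers (A := fun n => {x ∈ K | ε < |flowAvg φ g (q ^ n) x|}) (r := r) (b := b)
    (N₀ := N₀) hs (fun n => (hr0 n).le) hra hrlim hb ?_ ?_
  · -- every large time `T` is within a factor `q` of some `q ^ n`
    rintro x ⟨hxK, hx⟩ N
    obtain ⟨T, hTN, hT⟩ := frequently_atTop.1 hx (q ^ N)
    obtain ⟨n, hn1, hn2⟩ := exists_nat_pow_near ((hT1 N).trans hTN) hq1
    have hNn : N < n + 1 := (pow_lt_pow_iff_right₀ hq1).1 (hTN.trans_lt hn2)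
    refine ⟨n, by omega, hxK, ?_⟩
    have h1 := abs_flowAvg_le_of_le hM hInt x (hTpos n) hn1
    have h2 : M * (T - q ^ n) / q ^ n ≤ ε := by
      rw [div_le_iff₀ (hTpos n)]
      have : T - q ^ n ≤ ε / M * q ^ n := by
        rw [pow_succ, hq] at hn2
        rw [← hq] at hn2
        nlinarith
      calc M * (T - q ^ n) ≤ M * (ε / M * q ^ n) := by gcongr
        _ = ε * q ^ n := by field_simp
    linarith
  · intro n hn
    obtain ⟨hn1, hn2, hn3⟩ := hN₀ n hn
    have hrn := hr0 n
    have hv : 0 < c * (r n / 2) ^ β := mul_pos hc (Real.rpow_pos_of_pos (by linarith) _)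
    obtain ⟨F, hF1, hF2⟩ := exists_cover_card_mul_le μ
      (A := {x ∈ K | ε < |flowAvg φ g (q ^ n) x|}) (B := {x | ε / 2 ≤ |flowAvg φ g (q ^ n) x|})
      (r := r n) hv (fun x hx => hunif x hx.1 _ (by linarith) (by linarith)) (by
        rintro x ⟨hxK, hx⟩ y hy
        rw [mem_ball, dist_comm] at hy
        have h1 := abs_flowAvg_sub_le hM hInt (x := x) (y := y) (hT1 n) (Q := ε / 4)
          (by linarith) (by
            intro t ht1 htT
            refine (hnear x hxK y (by linarith) t ht1).trans ?_
            calc Λ * t ^ α * dist x y ≤ Λ * (q ^ n) ^ α * (r n / 2) := by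
                  have : t ^ α ≤ (q ^ n) ^ α := Real.rpow_le_rpow (by linarith) htT hα.le
                  have : 0 ≤ (q ^ n) ^ α := Real.rpow_nonneg (hTpos n).le _
                  gcongr
              _ = ε / 4 * ((q ^ n) ^ α * (q ^ n) ^ (-α)) := by
                  simp only [r, hρ]
                  field_simp
                  ring
              _ = ε / 4 := by
                  rw [← Real.rpow_add (hTpos n), add_neg_cancel, Real.rpow_zero, mul_one])
        have h2 : 2 * M / q ^ n ≤ ε / 4 := by
          rw [div_le_iff₀ hε] at hn3
          rw [div_le_iff₀ (hTpos n)]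
          linarith
        have h3 := abs_sub_abs_le_abs_sub (flowAvg φ g (q ^ n) x) (flowAvg φ g (q ^ n) y)
        change ε / 2 ≤ |flowAvg φ g (q ^ n) y|
        linarith)
    refine ⟨F, hF1, ?_⟩
    have h4 : (F.card : ℝ) ≤ V * (q ^ n) ^ (-κ) / (c * (r n / 2) ^ β) :=
      (le_div_iff₀ hv).2 (hF2.trans (hvar _ (hTpos n)))
    refine (mul_le_mul_of_nonneg_right h4 (Real.rpow_nonneg hrn.le s)).trans (le_of_eq ?_)
    have e1 : (r n / 2) ^ β = (ρ / 2) ^ β * (q ^ n) ^ (-(α * β)) := by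
      rw [show r n / 2 = ρ / 2 * (q ^ n) ^ (-α) by simp only [r]; ring,
        Real.mul_rpow (by positivity) (Real.rpow_nonneg (hTpos n).le _),
        ← Real.rpow_mul (hTpos n).le, neg_mul]
    have e2 : r n ^ s = ρ ^ s * (q ^ n) ^ (-(α * s)) := by
      simp only [r]
      rw [Real.mul_rpow (by positivity) (Real.rpow_nonneg (hTpos n).le _),
        ← Real.rpow_mul (hTpos n).le, neg_mul]
    have e3 : (q ^ (α * β - κ - α * s)) ^ n
        = (q ^ n) ^ (-κ) * (q ^ n) ^ (-(α * s)) / (q ^ n) ^ (-(α * β)) := by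
      rw [← Real.rpow_add (hTpos n), ← Real.rpow_sub (hTpos n), ← Real.rpow_natCast,
        ← Real.rpow_natCast, ← Real.rpow_mul hq0.le, ← Real.rpow_mul hq0.le]
      congr 1; ring
    simp only [b]
    rw [e1, e2, e3]
    have : (0:ℝ) < (q ^ n) ^ (-(α * β)) := Real.rpow_pos_of_pos (hTpos n) _
    have : (0:ℝ) < (ρ / 2) ^ β := Real.rpow_pos_of_pos (by positivity) _
    field_simp

theorem dimH_nonequidistributing_points_single_function_le
    {X : Type*} [MetricSpace X] [SigmaCompactSpace X] [MeasurableSpace X] [BorelSpace X]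
    (α : ℝ) (hα : 0 < α)
    (φ : ℝ → X → X)
    (hφ0 : ∀ x, φ 0 x = x)
    (hφadd : ∀ s t : ℝ, ∀ x, φ (s + t) x = φ s (φ t x))
    (hφmeas : Measurable fun p : ℝ × X => φ p.1 p.2)
    (hdiv : ∀ K : Set X, IsCompact K → ∃ C > 0, ∀ x ∈ K, ∀ y ∈ K, ∀ t : ℝ, 1 < t →
      φ t x ∈ K → dist (φ t x) (φ t y) ≤ C * t ^ α * dist x y)
    (β : ℝ) (hβ : 0 < β)
    (μ : Measure X) [IsProbabilityMeasure μ]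
    (hinv : ∀ t : ℝ, MeasurePreserving (φ t) μ μ)
    (hunif : ∀ K : Set X, IsCompact K → ∃ c > 0, ∃ r₀ > 0, ∀ x ∈ K, ∀ r : ℝ, 0 < r → r < r₀ →
      ENNReal.ofReal (c * r ^ β) ≤ μ (Metric.ball x r))
    (γ : ℝ) (hγ : 0 < γ)
    (f : X → ℝ)
    (hfLip : ∃ L : NNReal, LipschitzWith L f)
    (hfconst : ∃ K₀ : Set X, IsCompact K₀ ∧ ∃ c₀ : ℝ, ∀ x ∉ K₀, f x = c₀)
    (hmix : ∃ C > 0, ∀ t : ℝ, 1 < t →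
      |∫ x, (f x - ∫ y, f y ∂μ) * (f (φ t x) - ∫ y, f y ∂μ) ∂μ| ≤ C * t ^ (-γ)) :
    dimH {x : X |
        0 < Filter.limsup (fun T : ℝ => |flowAvg φ f T x - ∫ y, f y ∂μ|) Filter.atTop} ≤
      ENNReal.ofReal (β - α⁻¹ * min 1 γ) := by
  obtain ⟨L, hL⟩ := hfLip
  obtain ⟨K₀, hK₀, c₀, hc₀⟩ := hfconst
  obtain ⟨C, hC, hmix⟩ := hmix
  set m : ℝ := ∫ y, f y ∂μ
  let g : X → ℝ := fun x => f x - m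
  have hg : Measurable g := (hL.continuous.sub continuous_const).measurable
  obtain ⟨B₀, hB₀⟩ := hK₀.exists_bound_of_continuousOn hL.continuous.continuousOn
  set M : ℝ := max |B₀| |c₀| + |m| + 1 with hMdef
  have hM0 : 0 < M := by positivity
  have hM : ∀ x, |g x| ≤ M := by
    intro x
    have h1 : |f x| ≤ max |B₀| |c₀| := by
      by_cases hx : x ∈ K₀
      · exact ((hB₀ x hx).trans (le_abs_self _)).trans (le_max_left _ _)
      · rw [hc₀ x hx]; exact le_max_right _ _
    have h2 : |g x| ≤ |f x| + |m| := abs_sub _ _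
    linarith
  have hInt : ∀ x a b, IntervalIntegrable (fun t => g (φ t x)) volume a b := by
    intro x a b
    have hm : Measurable fun t => g (φ t x) :=
      (hg.comp hφmeas).comp (measurable_id.prodMk measurable_const)
    refine (intervalIntegrable_const (c := M)).mono_fun hm.aestronglyMeasurable
      (Eventually.of_forall fun t => ?_)
    exact (hM _).trans (le_abs_self _)
  have havg : ∀ x, ∀ T > 0, flowAvg φ f T x - m = flowAvg φ g T x := by
    intro x T hT
    have hf : IntervalIntegrable (fun t => f (φ t x)) volume 0 T := by
      have := (hInt x 0 T).add (intervalIntegrable_const (c := m))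
      simpa [g] using this
    simp only [flowAvg, g]
    rw [intervalIntegral.integral_sub hf intervalIntegrable_const,
      intervalIntegral.integral_const, sub_zero, smul_eq_mul]
    field_simp
  refine ENNReal.le_of_forall_pos_le_add fun η hη _ => ?_
  have hη' : (0:ℝ) < η := hη
  set s : ℝ := max (β - α⁻¹ * min 1 γ) 0 + η with hs
  have hs0 : 0 ≤ s := by positivity
  have hsη : ENNReal.ofReal (β - α⁻¹ * min 1 γ) + η = ENNReal.ofReal s := by
    rw [hs, ENNReal.ofReal_add (le_max_right _ _) hη'.le, ENNReal.ofReal_max, ENNReal.ofReal_zero,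
      ENNReal.ofReal_coe_nnreal]
    simp
  rw [hsη]
  have hmin : 0 < min 1 γ := lt_min one_pos hγ
  -- a decay rate strictly below `min 1 γ`, which makes `u ^ (-κ)` integrable at `0`
  set κ : ℝ := max (min 1 γ - α * η / 2) 0 with hκdef
  have hκ0 : 0 ≤ κ := le_max_right _ _
  have hκmin : κ < min 1 γ := by
    have : 0 < α * η / 2 := by positivity
    exact max_lt (by linarith) hmin
  have hκ1 : κ < 1 := hκmin.trans_le (min_le_left _ _)
  have hκγ : κ ≤ γ := (hκmin.trans_le (min_le_right _ _)).le
  have hexp : α * β - κ - α * s < 0 := by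
    have h1 : min 1 γ - α * η / 2 ≤ κ := le_max_left _ _
    have h2 : β - α⁻¹ * min 1 γ + η ≤ s := by
      rw [hs]; linarith [le_max_left (β - α⁻¹ * min 1 γ) 0]
    have h3 := mul_le_mul_of_nonneg_left h2 hα.le
    have h4 : α * (β - α⁻¹ * min 1 γ + η) = α * β - min 1 γ + α * η := by
      field_simp
    have : 0 < α * η := by positivity
    linarith
  have hcorr : ∀ t : ℝ, 0 < t → |∫ x, g x * g (φ t x) ∂μ| ≤ (C + M * M) * t ^ (-κ) := by
    intro t ht
    have hpos : 0 < t ^ (-κ) := Real.rpow_pos_of_pos ht _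
    have hMM : 0 ≤ M * M := by positivity
    rcases le_or_gt t 1 with h | h
    · have h1 : |∫ x, g x * g (φ t x) ∂μ| ≤ M * M := by
        have := norm_integral_le_of_norm_le_const (μ := μ) (f := fun x => g x * g (φ t x))
          (C := M * M) (Eventually.of_forall fun x => by
            rw [norm_mul]
            exact mul_le_mul (hM _) (hM _) (norm_nonneg _) hM0.le)
        simpa using this
      have h2 : 1 ≤ t ^ (-κ) := Real.one_le_rpow_of_pos_of_le_one_of_nonpos ht h (by linarith)
      nlinarith
    · have h1 : t ^ (-γ) ≤ t ^ (-κ) := Real.rpow_le_rpow_of_exponent_le h.le (by linarith)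
      have h2 := hmix t h
      have h3 : C * t ^ (-γ) ≤ C * t ^ (-κ) := by gcongr
      calc _ ≤ _ := h2
        _ ≤ _ := by nlinarith
  let K : ℕ → Set X := fun j => compactCovering X j ∪ K₀
  have hK : ∀ j, IsCompact (K j) := fun j => (isCompact_compactCovering X j).union hK₀
  let e : ℕ → ℝ := fun n => 1 / ((n : ℝ) + 1)
  have he : ∀ n, 0 < e n := fun n => by positivity
  have hsub : {x : X | 0 < limsup (fun T : ℝ => |flowAvg φ f T x - m|) atTop} ⊆
      ⋃ j, ⋃ n, {x ∈ K j | ∃ᶠ T in atTop, 2 * e n < |flowAvg φ g T x|} := by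
    intro x hx
    obtain ⟨j, hj⟩ := mem_iUnion.1
      ((iUnion_compactCovering X).symm ▸ mem_univ x : x ∈ ⋃ j, compactCovering X j)
    have hx' : 0 < limsup (fun T : ℝ => |flowAvg φ f T x - m|) atTop := hx
    obtain ⟨n, hn⟩ := exists_nat_one_div_lt (half_pos hx')
    refine mem_iUnion₂.2 ⟨j, n, Or.inl hj, ?_⟩
    have hfr := frequently_lt_of_lt_limsup (f := atTop)
      (u := fun T : ℝ => |flowAvg φ f T x - m|) (b := 2 * e n)
      (isBoundedUnder_of ⟨0, fun T => abs_nonneg _⟩ :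
        IsBoundedUnder (· ≥ ·) atTop _).isCoboundedUnder_le
      (by simp only [e]; linarith)
    refine (hfr.and_eventually (eventually_gt_atTop 0)).mono ?_
    rintro T ⟨h1, h2⟩
    rwa [havg x T h2] at h1
  refine (dimH_mono hsub).trans ?_
  simp only [dimH_iUnion]
  refine iSup₂_le fun j n => ?_
  obtain ⟨c, hc, r₀, hr₀, hball⟩ := hunif (K j) (hK j)
  obtain ⟨C', hC', δ, hδ, hnear⟩ := subdivergence_near_compact hdiv (hK j)
  refine dimH_large_deviation_le μ hM0 hM hInt (Λ := (L + 1) * C') hα hs0 hexp hc hr₀ hδ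
    (by positivity) (he n) hball ?_
    (fun T hT => measure_deviation_le μ hφadd hφmeas hinv hg hM hκ1 (by positivity) hcorr (he n) hT)
  intro x hx y hxy t ht
  have hR : 0 ≤ C' * t ^ α * dist x y := by positivity
  by_cases h : φ t x ∈ K j ∨ φ t y ∈ K j
  · have h1 := hnear x hx y hxy t ht h
    have h2 : |g (φ t x) - g (φ t y)| ≤ L * dist (φ t x) (φ t y) := by
      have := hL.dist_le_mul (φ t x) (φ t y)
      rw [Real.dist_eq] at this
      simpa [g] using this
    calc |g (φ t x) - g (φ t y)| ≤ L * dist (φ t x) (φ t y) := h2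
      _ ≤ L * (C' * t ^ α * dist x y) := by gcongr
      _ ≤ (L + 1) * C' * t ^ α * dist x y := by linarith
  · -- both points lie outside `K₀`, where `f` is constant
    push Not at h
    have hx0 : φ t x ∉ K₀ := fun h' => h.1 (Or.inr h')
    have hy0 : φ t y ∉ K₀ := fun h' => h.2 (Or.inr h')
    simp only [g, hc₀ _ hx0, hc₀ _ hy0, sub_self, abs_zero]
    positivity
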